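/- Let Q be an n×n invertible Hermitian complex matrix whose spectrum is contained in [−b, −a] ∪ [a, b] with 0 < a ≤ b, and let v ∈ ℂⁿ, v ≠ 0. Let ω₁, …, ω_m ≥ 0 and 0 < τ₁ ≤ τ₂ ≤ … ≤ τ_m be real numbers such that the rational function r(t) = Σ_{i=1}^{m} ωᵢ t/(t² + τᵢ) satisfies |sign(t) − r(t)| ≤ ε/2 for all t ∈ [−b, −a] ∪ [a, b], for some ε > 0. Let V̂ be an n×k matrix with orthonormal columns, first column v/‖v‖₂, and T̂ a k×k real symmetric tridiagonal matrix with positive subdiagonal entries, β̂ > 0 and v̂ a unit vector orthogonal to the columns of V̂, with Q² V̂ = V̂ T̂ + β̂ v̂ e_kᵀ (the Lanczos relation for Q² and v). Define the multishift-CG iterates x_k^i = V̂ (T̂ + τᵢ I)^{−1} e₁ ‖v‖₂ and residuals r_k^i = v − (Q² + τᵢ I) x_k^i for i = 1, …, m, and set x^{pfe} = Σ_{i=1}^{m} ωᵢ Q (Q² + τᵢ I)^{−1} v and x_k = Σ_{i=1}^{m} ωᵢ Q x_k^i. Then ‖x^{pfe} − x_k‖₂ ≤ (1 + ε/2) ‖r_k^1‖₂.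 -/

import Mathlib

/-!
Because of the Lanczos relation every residual `r_k^i` is a multiple of `v̂`, with factor
proportional to the corner entry of `(T̂ + τᵢ I)⁻¹`. By Cramer's rule that entry is a quotient whose
numerator `± ∏ⱼ T̂_{j+1,j}` does not depend on the shift, so `det (T̂ + τᵢ I) • r_k^i` is the same
vector for all `i`. As `T̂ = V̂ᴴ Q² V̂` is positive semidefinite, its shifted determinants are
positive and increase with the shift; hence `r_k^i = ρᵢ r_k^1` with `0 ≤ ρᵢ ≤ 1`.

Consequently `x^{pfe} - x_k = ∑ᵢ ωᵢ Q (Q² + τᵢ I)⁻¹ r_k^i = g(Q) r_k^1` for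
`g(t) = ∑ᵢ ωᵢ ρᵢ t / (t² + τᵢ)`. For fixed `t` all terms of `r(t) = ∑ᵢ ωᵢ t / (t² + τᵢ)` have the
same sign, so `|g| ≤ |r| ≤ 1 + ε/2` on the spectrum of `Q`, which bounds the norm of `g(Q)`.
-/

open Matrix Polynomial

/-- The Euclidean (l2) norm on `ℂⁿ`. -/
noncomputable def e2norm {n : ℕ} (x : Fin n → ℂ) : ℝ :=
  Real.sqrt (∑ i, ‖x i‖ ^ 2)

lemma map_nonsing_inv {n K L : Type*} [Fintype n] [DecidableEq n] [Field K] [Field L]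
    (f : K →+* L) (A : Matrix n n K) : A⁻¹.map f = (A.map f)⁻¹ := by
  rw [inv_def, inv_def, Matrix.map_smul' _ _ _ (map_mul f), ← RingHom.mapMatrix_apply,
    ← RingHom.mapMatrix_apply, RingHom.map_adjugate, ← RingHom.map_det, Ring.inverse_eq_inv',
    Ring.inverse_eq_inv', ← map_inv₀]

section CollinearResiduals

/-- Upper Hessenberg matrices: all entries below the first subdiagonal vanish. A Hermitian matrix
is upper Hessenberg exactly when it is tridiagonal. -/
def IsUpperHessenberg {R : Type*} [Zero R] {k : ℕ} (T : Matrix (Fin k) (Fin k) R) : Prop :=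
  ∀ i j : Fin k, (j : ℕ) + 1 < i → T i j = 0

variable {R n : Type*} [CommRing R] {k : ℕ}

/-- The Galerkin iterate `V (T + s I)⁻¹ (c e₁)` for the shifted system `(A + s I) x = v`, where the
columns of `V` are a Krylov basis with first column `c⁻¹ v` and `T` is the compression of `A`. For
positive definite `A + s I` it is the conjugate gradient iterate. -/
noncomputable def galerkinIterate (V : Matrix n (Fin (k + 1)) R)
    (T : Matrix (Fin (k + 1)) (Fin (k + 1)) R) (c s : R) : n → R :=
  c • (V *ᵥ ((T + s • 1)⁻¹ *ᵥ Pi.single 0 1))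

/-- The residual `v - (A + s I) x` of the Galerkin iterate `x`. -/
noncomputable def galerkinResidual [Fintype n] [DecidableEq n] (A : Matrix n n R)
    (V : Matrix n (Fin (k + 1)) R) (T : Matrix (Fin (k + 1)) (Fin (k + 1)) R) (v : n → R)
    (c s : R) : n → R :=
  v - (A + s • 1) *ᵥ galerkinIterate V T c s

/-- The minor computing this entry is triangular, with the subdiagonal of `T` on its diagonal. -/
lemma IsUpperHessenberg.adjugate_add_smul_one_last_zero
    {T : Matrix (Fin (k + 1)) (Fin (k + 1)) R} (hT : IsUpperHessenberg T) (s : R) :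
    (T + s • 1).adjugate (Fin.last k) 0 = (-1) ^ k * ∏ i : Fin k, T i.succ i.castSucc := by
  rw [adjugate_fin_succ_eq_det_submatrix, det_of_isUpperTriangular]
  · simp [Fin.ext_iff]
  · intro i j hij
    have hlt : (j : ℕ) < i := hij
    have hne : i.succ ≠ j.castSucc := fun h => by
      simp only [Fin.ext_iff, Fin.val_succ, Fin.val_castSucc] at h
      omega
    simpa [hne] using hT i.succ j.castSucc (by simpa using hlt)

variable [Fintype n] [DecidableEq n] {A : Matrix n n R} {V : Matrix n (Fin (k + 1)) R}
  {T : Matrix (Fin (k + 1)) (Fin (k + 1)) R} {v w : n → R} {c s : R}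

lemma inv_mulVec_sub_galerkinIterate (hA : IsUnit (A + s • 1).det) :
    (A + s • 1)⁻¹ *ᵥ v - galerkinIterate V T c s =
      (A + s • 1)⁻¹ *ᵥ galerkinResidual A V T v c s := by
  rw [galerkinResidual, mulVec_sub, mulVec_mulVec, nonsing_inv_mul _ hA, one_mulVec]

lemma galerkinResidual_eq_smul
    (hAV : A * V = V * T + vecMulVec w (Pi.single (Fin.last k) 1)) (hv : c • V.col 0 = v)
    (hT : IsUnit (T + s • 1).det) :
    galerkinResidual A V T v c s = -(c * (T + s • 1)⁻¹ (Fin.last k) 0) • w := by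
  have hshift : (A + s • 1) * V =
      V * (T + s • 1) + vecMulVec w (Pi.single (Fin.last k) 1) := by
    simp only [Matrix.add_mul, Matrix.mul_add, hAV, Matrix.smul_mul, Matrix.mul_smul,
      Matrix.one_mul, Matrix.mul_one]
    abel
  have hiter : (A + s • 1) *ᵥ galerkinIterate V T c s =
      v + (c * (T + s • 1)⁻¹ (Fin.last k) 0) • w := by
    rw [galerkinIterate, mulVec_smul, mulVec_mulVec, hshift, add_mulVec, mulVec_mulVec,
      Matrix.mul_assoc, mul_nonsing_inv _ hT, Matrix.mul_one, vecMulVec_mulVec, smul_add,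
      mulVec_single_one, mulVec_single_one, hv, single_one_dotProduct, op_smul_eq_smul, smul_smul,
      col_apply]
  rw [galerkinResidual, hiter, sub_add_cancel_left, neg_smul]

lemma IsUpperHessenberg.det_smul_galerkinResidual (hT : IsUpperHessenberg T)
    (hAV : A * V = V * T + vecMulVec w (Pi.single (Fin.last k) 1)) (hv : c • V.col 0 = v)
    (hs : IsUnit (T + s • 1).det) :
    (T + s • 1).det • galerkinResidual A V T v c s =
      -(c * ((-1) ^ k * ∏ i : Fin k, T i.succ i.castSucc)) • w := by
  rw [galerkinResidual_eq_smul hAV hv hs, inv_def, Matrix.smul_apply,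
    hT.adjugate_add_smul_one_last_zero, smul_smul, smul_eq_mul, mul_neg, mul_left_comm,
    Ring.mul_inverse_cancel_left _ _ hs]

end CollinearResiduals

section SpectralCalculus

open scoped ComplexOrder

variable {n 𝕜 : Type*} [RCLike 𝕜] [Fintype n] [DecidableEq n] {A : Matrix n n 𝕜}

lemma det_cfc (hA : A.IsHermitian) (f : ℝ → ℝ) :
    (cfc f A).det = ((∏ i, f (hA.eigenvalues i) : ℝ) : 𝕜) := by
  rw [hA.cfc_eq, IsHermitian.cfc, Unitary.conjStarAlgAut_apply, det_mul_right_comm,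
    Unitary.mul_star_self_of_mem hA.eigenvectorUnitary.2, Matrix.one_mul, det_diagonal]
  simp

lemma cfc_add_const_eq_add_smul_one (hA : A.IsHermitian) (f : ℝ → ℝ) (s : ℝ) :
    cfc (fun x => f x + s) A = cfc f A + (s : 𝕜) • 1 := by
  rw [cfc_add_const s f A (A.finite_real_spectrum.continuousOn f) hA.isSelfAdjoint,
    Algebra.algebraMap_eq_smul_one, RCLike.real_smul_eq_coe_smul (K := 𝕜)]

lemma det_add_smul_one (hA : A.IsHermitian) (s : ℝ) :
    (A + (s : 𝕜) • 1).det = ((∏ i, (hA.eigenvalues i + s) : ℝ) : 𝕜) := by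
  rw [← det_cfc hA (· + s), cfc_add_const_eq_add_smul_one hA (fun x => x),
    cfc_id' ℝ A hA.isSelfAdjoint]

open scoped Matrix.Norms.L2Operator in
lemma norm_toLp_cfc_mulVec_le (hA : A.IsHermitian) {f : ℝ → ℝ} {C : ℝ} (hC : 0 ≤ C)
    (hf : ∀ i, |f (hA.eigenvalues i)| ≤ C) (x : n → 𝕜) :
    ‖WithLp.toLp 2 (cfc f A *ᵥ x)‖ ≤ C * ‖WithLp.toLp 2 x‖ := by
  have hnorm : ‖cfc f A‖ ≤ C := by
    rw [hA.cfc_eq, IsHermitian.cfc, Unitary.conjStarAlgAut_apply, ← Unitary.coe_star,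
      CStarRing.norm_mul_coe_unitary, CStarRing.norm_coe_unitary_mul, l2_opNorm_diagonal,
      pi_norm_le_iff_of_nonneg hC]
    simpa using hf
  exact (l2_opNorm_mulVec _ _).trans (by gcongr)

lemma det_add_smul_one_ne_zero (hA : A.PosSemidef) {s : ℝ} (hs : 0 < s) :
    (A + (s : 𝕜) • 1).det ≠ 0 := by
  rw [det_add_smul_one hA.1, RCLike.ofReal_ne_zero]
  exact (Finset.prod_pos fun i _ => add_pos_of_nonneg_of_pos (hA.eigenvalues_nonneg i) hs).ne'

lemma exists_det_add_smul_one_eq_mul (hA : A.PosSemidef) {s t : ℝ} (hs : 0 < s) (hst : s ≤ t) :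
    ∃ ρ ∈ Set.Icc (0 : ℝ) 1, (A + (s : 𝕜) • 1).det = ρ * (A + (t : 𝕜) • 1).det := by
  have hnonneg : ∀ i, 0 ≤ hA.1.eigenvalues i := hA.eigenvalues_nonneg
  have hle : ∏ i, (hA.1.eigenvalues i + s) ≤ ∏ i, (hA.1.eigenvalues i + t) :=
    Finset.prod_le_prod (fun i _ => add_nonneg (hnonneg i) hs.le) fun i _ => by gcongr
  have hpos : 0 < ∏ i, (hA.1.eigenvalues i + s) :=
    Finset.prod_pos fun i _ => add_pos_of_nonneg_of_pos (hnonneg i) hs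
  refine ⟨(∏ i, (hA.1.eigenvalues i + s)) / ∏ i, (hA.1.eigenvalues i + t),
    ⟨div_nonneg hpos.le (hpos.le.trans hle), div_le_one_of_le₀ hle (hpos.le.trans hle)⟩, ?_⟩
  rw [det_add_smul_one hA.1, det_add_smul_one hA.1, ← RCLike.ofReal_mul,
    div_mul_cancel₀ _ (hpos.trans_le hle).ne']

end SpectralCalculus

section ShrinkingResiduals

lemma posSemidef_sq_of_isHermitian {R n : Type*} [Ring R] [PartialOrder R] [StarRing R]
    [StarOrderedRing R] [Fintype n] [DecidableEq n] {Q : Matrix n n R} (hQ : Q.IsHermitian) :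
    (Q ^ 2).PosSemidef := by
  simpa [hQ.eq, sq] using posSemidef_conjTranspose_mul_self Q

lemma conjTranspose_mul_mul_eq_of_mul_eq_add_vecMulVec {R m n : Type*} [Ring R] [StarRing R]
    [Fintype m] [DecidableEq m] [Fintype n] {A : Matrix n n R} {V : Matrix n m R} {T : Matrix m m R}
    {w : n → R} {e : m → R} (hV : Vᴴ * V = 1) (hw : Vᴴ *ᵥ w = 0)
    (hAV : A * V = V * T + vecMulVec w e) : Vᴴ * A * V = T := by
  rw [Matrix.mul_assoc, hAV, Matrix.mul_add, ← Matrix.mul_assoc, hV, Matrix.one_mul,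
    mul_vecMulVec, hw, zero_vecMulVec, add_zero]

open scoped ComplexOrder

variable {n 𝕜 : Type*} [RCLike 𝕜] [Fintype n] [DecidableEq n] {k : ℕ} {A : Matrix n n 𝕜}
  {V : Matrix n (Fin (k + 1)) 𝕜} {T : Matrix (Fin (k + 1)) (Fin (k + 1)) 𝕜} {v w : n → 𝕜} {c : 𝕜}

lemma exists_galerkinResidual_eq_smul (hA : A.PosSemidef) (hV : Vᴴ * V = 1) (hw : Vᴴ *ᵥ w = 0)
    (hT : IsUpperHessenberg T) (hAV : A * V = V * T + vecMulVec w (Pi.single (Fin.last k) 1))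
    (hv : c • V.col 0 = v) {s t : ℝ} (hs : 0 < s) (hst : s ≤ t) :
    ∃ ρ ∈ Set.Icc (0 : ℝ) 1,
      galerkinResidual A V T v c t = (ρ : 𝕜) • galerkinResidual A V T v c s := by
  have hTpos : T.PosSemidef :=
    conjTranspose_mul_mul_eq_of_mul_eq_add_vecMulVec hV hw hAV ▸ hA.conjTranspose_mul_mul_same V
  have hdet : ∀ r : ℝ, 0 < r → (T + (r : 𝕜) • 1).det ≠ 0 :=
    fun r hr => det_add_smul_one_ne_zero hTpos hr
  obtain ⟨ρ, hρ, hratio⟩ := exists_det_add_smul_one_eq_mul hTpos hs hst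
  have ht := hdet t (hs.trans_le hst)
  refine ⟨ρ, hρ, smul_right_injective _ ht ?_⟩
  calc (T + (t : 𝕜) • 1).det • galerkinResidual A V T v c t
      = (T + (s : 𝕜) • 1).det • galerkinResidual A V T v c s := by
        rw [hT.det_smul_galerkinResidual hAV hv ht.isUnit,
          hT.det_smul_galerkinResidual hAV hv (hdet s hs).isUnit]
    _ = (T + (t : 𝕜) • 1).det • (ρ : 𝕜) • galerkinResidual A V T v c s := by
        rw [hratio, mul_comm, mul_smul]

end ShrinkingResiduals

section PartialFractions

variable {ι : Type*} [Fintype ι]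

/-- The odd rational function `r(t) = ∑ᵢ ωᵢ t / (t² + τᵢ)` with weights `ω` and shifts `τ`. -/
noncomputable def partialFraction (ω τ : ι → ℝ) (t : ℝ) : ℝ :=
  ∑ i, ω i * (t / (t ^ 2 + τ i))

/-- All summands have the sign of `t`, so no cancellation can make larger weights give a smaller
sum. -/
lemma abs_partialFraction_le_abs {ω ω' τ : ι → ℝ} (hω' : ∀ i, 0 ≤ ω' i) (hω : ∀ i, ω' i ≤ ω i)
    (hτ : ∀ i, 0 ≤ τ i) (t : ℝ) : |partialFraction ω' τ t| ≤ |partialFraction ω τ t| := by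
  have habs : ∀ c : ι → ℝ, (∀ i, 0 ≤ c i) →
      |partialFraction c τ t| = ∑ i, c i * (|t| / (t ^ 2 + τ i)) := fun c hc => by
    have hfactor : partialFraction c τ t = t * ∑ i, c i / (t ^ 2 + τ i) := by
      rw [partialFraction, Finset.mul_sum]
      exact Finset.sum_congr rfl fun i _ => by ring
    have hsum : 0 ≤ ∑ i, c i / (t ^ 2 + τ i) :=
      Finset.sum_nonneg fun i _ => div_nonneg (hc i) (add_nonneg (sq_nonneg t) (hτ i))
    rw [hfactor, abs_mul, abs_of_nonneg hsum, Finset.mul_sum]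
    exact Finset.sum_congr rfl fun i _ => by ring
  rw [habs ω' hω', habs ω fun i => (hω' i).trans (hω i)]
  gcongr with i
  · exact div_nonneg (abs_nonneg t) (add_nonneg (sq_nonneg t) (hτ i))
  · exact hω i

lemma cfc_partialFraction {n 𝕜 : Type*} [RCLike 𝕜] [Fintype n] [DecidableEq n]
    {Q : Matrix n n 𝕜} (hQ : Q.IsHermitian) (ω : ι → ℝ) {τ : ι → ℝ} (hτ : ∀ i, 0 < τ i) :
    cfc (partialFraction ω τ) Q =
      ∑ i, (ω i : 𝕜) • (Q * (Q ^ 2 + (τ i : 𝕜) • 1)⁻¹) := by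
  have hcont : ∀ f : ℝ → ℝ, ContinuousOn f (spectrum ℝ Q) := Q.finite_real_spectrum.continuousOn
  have hsum : partialFraction ω τ = ∑ i, fun t => ω i * (t / (t ^ 2 + τ i)) := by
    ext t
    simp [partialFraction]
  rw [hsum, cfc_sum_univ _ Q fun i => hcont _]
  refine Finset.sum_congr rfl fun i _ => ?_
  have hden : ∀ t ∈ spectrum ℝ Q, t ^ 2 + τ i ≠ 0 :=
    fun t _ => (add_pos_of_nonneg_of_pos (sq_nonneg t) (hτ i)).ne'
  rw [cfc_const_mul _ _ _ (hcont _),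
    cfc_map_div (fun t => t) (fun t => t ^ 2 + τ i) Q hden (hcont _) (hcont _) hQ.isSelfAdjoint,
    cfc_add_const_eq_add_smul_one hQ, cfc_pow_id Q 2 hQ.isSelfAdjoint, cfc_id' ℝ Q hQ.isSelfAdjoint,
    ← nonsing_inv_eq_ringInverse, RCLike.real_smul_eq_coe_smul (K := 𝕜)]

lemma abs_le_one_add_of_abs_sign_sub_le {t x δ : ℝ} (h : |Real.sign t - x| ≤ δ) : |x| ≤ 1 + δ := by
  have hsign : |Real.sign t| ≤ 1 := by
    rcases Real.sign_apply_eq t with ht | ht | ht <;> simp [ht]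
  have htriangle := abs_sub_abs_le_abs_sub x (Real.sign t)
  rw [abs_sub_comm] at htriangle
  linarith

end PartialFractions

open scoped ComplexOrder in
theorem multishift_cg_pfe_error_bound_general {ι n 𝕜 : Type*} [Fintype ι] [Fintype n]
    [DecidableEq n] [RCLike 𝕜] {k : ℕ} {Q : Matrix n n 𝕜} (hQ : Q.IsHermitian)
    {V : Matrix n (Fin (k + 1)) 𝕜} (hV : Vᴴ * V = 1)
    {T : Matrix (Fin (k + 1)) (Fin (k + 1)) 𝕜} (hT : IsUpperHessenberg T)
    {w : n → 𝕜} (hw : Vᴴ *ᵥ w = 0)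
    (hQV : Q ^ 2 * V = V * T + vecMulVec w (Pi.single (Fin.last k) 1))
    {c : 𝕜} {v : n → 𝕜} (hv : c • V.col 0 = v)
    {ω τ : ι → ℝ} (hω : ∀ i, 0 ≤ ω i) (hτ : ∀ i, 0 < τ i) {i₀ : ι} (hi₀ : ∀ i, τ i₀ ≤ τ i)
    {C : ℝ} (hC : 0 ≤ C) (hr : ∀ j, |partialFraction ω τ (hQ.eigenvalues j)| ≤ C) :
    ‖WithLp.toLp 2 (∑ i, (ω i : 𝕜) • (Q *ᵥ ((Q ^ 2 + (τ i : 𝕜) • 1)⁻¹ *ᵥ v)) -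
        ∑ i, (ω i : 𝕜) • (Q *ᵥ galerkinIterate V T c (τ i)))‖ ≤
      C * ‖WithLp.toLp 2 (galerkinResidual (Q ^ 2) V T v c (τ i₀))‖ := by
  have hQsq := posSemidef_sq_of_isHermitian hQ
  choose ρ hρ hres using fun i =>
    exists_galerkinResidual_eq_smul hQsq hV hw hT hQV hv (hτ i₀) (hi₀ i)
  have herr : ∑ i, (ω i : 𝕜) • (Q *ᵥ ((Q ^ 2 + (τ i : 𝕜) • 1)⁻¹ *ᵥ v)) -
      ∑ i, (ω i : 𝕜) • (Q *ᵥ galerkinIterate V T c (τ i)) =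
      cfc (partialFraction (ω * ρ) τ) Q *ᵥ galerkinResidual (Q ^ 2) V T v c (τ i₀) := by
    rw [cfc_partialFraction hQ _ hτ, sum_mulVec, ← Finset.sum_sub_distrib]
    refine Finset.sum_congr rfl fun i _ => ?_
    rw [← smul_sub, ← mulVec_sub,
      inv_mulVec_sub_galerkinIterate (det_add_smul_one_ne_zero hQsq (hτ i)).isUnit, hres i,
      mulVec_smul, mulVec_smul, smul_smul, mulVec_mulVec, smul_mulVec, Pi.mul_apply,
      RCLike.ofReal_mul]
  rw [herr]
  refine norm_toLp_cfc_mulVec_le hQ hC (fun j => le_trans ?_ (hr j)) _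
  exact abs_partialFraction_le_abs (fun i => mul_nonneg (hω i) (hρ i).1)
    (fun i => mul_le_of_le_one_right (hω i) (hρ i).2) (fun i => (hτ i).le) _

lemma e2norm_eq_norm_toLp {n : ℕ} (x : Fin n → ℂ) : e2norm x = ‖WithLp.toLp 2 x‖ :=
  (EuclideanSpace.norm_eq _).symm

lemma e2norm_ne_zero {n : ℕ} {x : Fin n → ℂ} (hx : x ≠ 0) : e2norm x ≠ 0 := by
  simpa [e2norm_eq_norm_toLp] using hx

/-- Error bound for the multishift-CG / partial fraction expansion
approximation of `sign(Q)v`: with a rational approximation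
`r(t) = ∑ᵢ ωᵢ t/(t² + τᵢ)` satisfying `|sign(t) - r(t)| ≤ ε/2` on
`[-b,-a] ∪ [a,b] ⊇ spec(Q)`, `ωᵢ ≥ 0`, `0 < τ₁ ≤ … ≤ τ_m`, the Lanczos relation
`Q² V̂ = V̂ T̂ + β̂ v̂ e_kᵀ`, the multishift-CG iterates
`x_k^i = V̂ (T̂ + τᵢ I)⁻¹ e₁ ‖v‖₂`, residuals `r_k^i = v - (Q² + τᵢ I) x_k^i`,
`x^{pfe} = ∑ᵢ ωᵢ Q (Q² + τᵢ I)⁻¹ v`, and `x_k = ∑ᵢ ωᵢ Q x_k^i`, one has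
`‖x^{pfe} − x_k‖₂ ≤ (1 + ε/2) ‖r_k^1‖₂`. -/
theorem multishift_cg_pfe_error_bound {n k m : ℕ} (hk : 0 < k) (hm : 0 < m)
    (Q : Matrix (Fin n) (Fin n) ℂ) (hQ : Q.IsHermitian) (hQinv : IsUnit Q.det)
    (a b : ℝ) (ha : 0 < a) (hab : a ≤ b)
    (hspec : ∀ i, hQ.eigenvalues i ∈ Set.Icc (-b) (-a) ∪ Set.Icc a b)
    (v : Fin n → ℂ) (hv : v ≠ 0)
    (ω τ : Fin m → ℝ) (hω : ∀ i, 0 ≤ ω i) (hτpos : ∀ i, 0 < τ i) (hτmono : Monotone τ)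
    (ε : ℝ) (hε : 0 < ε)
    (hrat : ∀ t : ℝ, t ∈ Set.Icc (-b) (-a) ∪ Set.Icc a b →
      |Real.sign t - ∑ i, ω i * (t / (t ^ 2 + τ i))| ≤ ε / 2)
    (V : Matrix (Fin n) (Fin k) ℂ) (hVorth : Vᴴ * V = 1)
    (hV1 : V *ᵥ Pi.single (⟨0, hk⟩ : Fin k) 1 = (e2norm v : ℂ)⁻¹ • v)
    (T : Matrix (Fin k) (Fin k) ℝ) (hTsym : T.IsHermitian)
    (hTtri : ∀ i j : Fin k, 1 < ((i : ℤ) - (j : ℤ)).natAbs → T i j = 0)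
    (hTsub : ∀ (i : ℕ) (h : i + 1 < k), 0 < T ⟨i + 1, h⟩ ⟨i, Nat.lt_of_succ_lt h⟩)
    (βh : ℝ) (hβ : 0 < βh)
    (vh : Fin n → ℂ) (hvh : e2norm vh = 1) (hvhV : star vh ᵥ* V = 0)
    (hrel : Q ^ 2 * V = V * T.map (algebraMap ℝ ℂ) +
      (βh : ℂ) • vecMulVec vh (Pi.single (⟨k - 1, Nat.sub_lt hk one_pos⟩ : Fin k) 1))
    (xk : Fin m → Fin n → ℂ)
    (hxk : ∀ i, xk i = (e2norm v : ℂ) •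
      (V *ᵥ (((T + τ i • 1)⁻¹.map (algebraMap ℝ ℂ)) *ᵥ Pi.single (⟨0, hk⟩ : Fin k) 1)))
    (rk : Fin m → Fin n → ℂ)
    (hrk : ∀ i, rk i = v - (Q ^ 2 + (τ i : ℂ) • 1) *ᵥ xk i)
    (xpfe xsum : Fin n → ℂ)
    (hxpfe : xpfe = ∑ i, (ω i : ℂ) • (Q *ᵥ ((Q ^ 2 + (τ i : ℂ) • 1)⁻¹ *ᵥ v)))
    (hxsum : xsum = ∑ i, (ω i : ℂ) • (Q *ᵥ xk i)) :
    e2norm (xpfe - xsum) ≤ (1 + ε / 2) * e2norm (rk ⟨0, hm⟩) := by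
  obtain ⟨k, rfl⟩ := Nat.exists_eq_add_one.2 hk
  have hv₁ : (e2norm v : ℂ) • V.col 0 = v := by
    rw [← mulVec_single_one]
    exact (eq_inv_smul_iff₀ (Complex.ofReal_ne_zero.2 (e2norm_ne_zero hv))).1 hV1
  have hT : IsUpperHessenberg (T.map (algebraMap ℝ ℂ)) := fun i j hij => by
    simp [hTtri i j (by omega)]
  have hw : Vᴴ *ᵥ ((βh : ℂ) • vh) = 0 := by
    rw [mulVec_smul, ← star_star vh, ← star_vecMul, hvhV, star_zero, smul_zero]
  have hxk' : ∀ i, xk i =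
      galerkinIterate V (T.map (algebraMap ℝ ℂ)) (e2norm v) (τ i) := fun i => by
    rw [hxk, map_nonsing_inv, Matrix.map_add _ (map_add _), Matrix.map_smul' _ _ _ (map_mul _),
      Matrix.map_one _ (map_zero _) (map_one _)]
    rfl
  rw [e2norm_eq_norm_toLp, e2norm_eq_norm_toLp, hxpfe, hxsum, hrk]
  simp only [hxk']
  rw [← smul_vecMulVec] at hrel
  exact multishift_cg_pfe_error_bound_general hQ hVorth hT hw hrel hv₁ hω hτpos
    (fun i => hτmono (Nat.zero_le i)) (by positivity)
    fun j => abs_le_one_add_of_abs_sign_sub_le (hrat _ (hspec j))
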